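/- arXiv:2306.07444 — 6 statements merged into one kernel-verified Lean document; each statement's English description precedes it below -/
import Mathlib

section
/- Suppose 𝔪 = 𝔪_1 ⊕ ⋯ ⊕ 𝔪_r is an orthogonal direct sum of subspaces and λ_1, …, λ_r are mutually distinct real numbers satisfying the compatibility condition. Then for all indices i ≠ j, all k, and all X_i ∈ 𝔪_i, Y_j ∈ 𝔪_j, Z_k ∈ 𝔪_k: ⟨α(X_i,Y_j),Z_k⟩ = ((λ_i−λ_k)/(λ_i−λ_j)) ⟨[X_i,Y_j],Z_k⟩. -/
open scoped RealInnerProductSpace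

/-- Under the compatibility condition, the Levi-Civita product on
mixed eigenspaces is expressed in terms of the bracket. -/
theorem levi_civita_product_on_mixed_eigenspaces
    {m : Type*} [NormedAddCommGroup m] [InnerProductSpace ℝ m] [FiniteDimensional ℝ m]
    (b : m →ₗ[ℝ] m →ₗ[ℝ] m) (hb : ∀ X Y : m, b X Y = - b Y X)
    (a : m →ₗ[ℝ] m →ₗ[ℝ] m)
    (ha : ∀ X Y Z : m, 2 * ⟪a X Y, Z⟫ = ⟪b X Y, Z⟫ - ⟪X, b Y Z⟫ - ⟪b X Z, Y⟫)
    (r : ℕ) (mS : Fin r → Submodule ℝ m) (lam : Fin r → ℝ)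
    (horth : ∀ i j, i ≠ j → ∀ X ∈ mS i, ∀ Y ∈ mS j, ⟪X, Y⟫ = 0)
    (hspan : ⨆ i, mS i = ⊤)
    (hlam : Function.Injective lam)
    (hcompat : ∀ i j k : Fin r, ∀ X ∈ mS i, ∀ Y ∈ mS j, ∀ Z ∈ mS k,
      (lam i - lam k) ^ 2 * ⟪b X Y, Z⟫ + (lam j - lam i) ^ 2 * ⟪b X Z, Y⟫ = 0) :
    ∀ i j k : Fin r, i ≠ j → ∀ X ∈ mS i, ∀ Y ∈ mS j, ∀ Z ∈ mS k,
      ⟪a X Y, Z⟫ = ((lam i - lam k) / (lam i - lam j)) * ⟪b X Y, Z⟫ := by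
  intro i j k hij X hX Y hY Z hZ
  have hD : lam i - lam j ≠ 0 := sub_ne_zero.mpr (hlam.ne hij)
  -- Compatibility at `(i, j, k)` and at `(j, i, k)` expresses the last two Koszul terms
  -- as multiples of `⟪b X Y, Z⟫`.
  have h1 := hcompat i j k X hX Y hY Z hZ
  have h2 := hcompat j i k Y hY X hX Z hZ
  rw [hb Y X, inner_neg_left, real_inner_comm X (b Y Z)] at h2
  have hK := ha X Y Z
  -- Here `(lᵢ - lⱼ)² - (lⱼ - lₖ)² + (lᵢ - lₖ)² = 2 (lᵢ - lₖ) (lᵢ - lⱼ)`.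
  have key : (lam i - lam j) ^ 2 * ⟪a X Y, Z⟫
      = (lam i - lam j) * (lam i - lam k) * ⟪b X Y, Z⟫ := by
    linear_combination (lam i - lam j) ^ 2 / 2 * hK - h1 / 2 - h2 / 2
  field_simp
  apply mul_left_cancel₀ hD
  linear_combination key
end

section
/- Suppose 𝔪 = 𝔪_1 ⊕ ⋯ ⊕ 𝔪_r is an orthogonal direct sum of subspaces and λ_1, …, λ_r are mutually distinct real numbers satisfying the compatibility condition. Fix k and Z ∈ 𝔪_k, and suppose the endomorphism ad(Z) : 𝔪 → 𝔪, X ↦ [Z,X], is nilpotent and its restriction ad(Z)|_{𝔪_k} : 𝔪_k → 𝔪_k is nilpotent. Then [Z,X] ∈ 𝔪_k for every X ∈ 𝔪_k^⊥. -/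
/-!
Write `A = b Z`, let `P j` be the orthogonal projection onto `mS j`, and consider the symmetric
positive semidefinite operator `D = ∑ j, (lam j - lam k) ^ 2 • P j`. As the `lam j` are distinct,
its kernel is `mS k`. The compatibility condition with first argument `Z` says exactly that `A` is
skew for the semi-inner product `⟪x, D y⟫` (`⟪A x, D y⟫ = -⟪A y, D x⟫`). An operator that is both
skew for a semi-inner product and nilpotent takes values in its radical
(`apply_mem_ker_of_skew_of_pow_eq_zero`), so `A` maps all of `m` into `ker D = mS k`.
-/

open scoped RealInnerProductSpace

/-- A nilpotent operator that is skew for the semi-inner product `⟪x, D y⟫` takes values in the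
radical `ker D`: if `A ^ (n + 2)` does, then `⟪A ^ (n + 1) x, D (A ^ (n + 1) x)⟫` vanishes by
skewness, so `A ^ (n + 1)` does too. -/
lemma apply_mem_ker_of_skew_of_pow_eq_zero
    {m : Type*} [NormedAddCommGroup m] [InnerProductSpace ℝ m] (A D : m →ₗ[ℝ] m)
    (hD : ∀ y, ⟪y, D y⟫ = 0 → D y = 0)
    (hskew : ∀ x y, ⟪A x, D y⟫ = -⟪A y, D x⟫)
    (hsymm : ∀ x y, ⟪x, D y⟫ = ⟪y, D x⟫)
    (n : ℕ) (hn : ∀ x, D ((A ^ (n + 1)) x) = 0) (x : m) : D (A x) = 0 := by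
  induction n with
  | zero => simpa using hn x
  | succ n ih =>
    refine ih fun x => hD _ ?_
    have h := hskew ((A ^ n) x) ((A ^ (n + 1)) x)
    have e1 : A ((A ^ n) x) = (A ^ (n + 1)) x := by rw [pow_succ', Module.End.mul_apply]
    have e2 : A ((A ^ (n + 1)) x) = (A ^ (n + 1 + 1)) x := by
      rw [pow_succ' A (n + 1), Module.End.mul_apply]
    rw [e1, e2, hsymm ((A ^ (n + 1 + 1)) x), hn x, inner_zero_right, neg_zero] at h
    exact h

/-- If `ad(Z)` and its restriction to `𝔪ₖ` are nilpotent, then under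
the compatibility condition `ad(Z)` maps `𝔪ₖ^⊥` into `𝔪ₖ`. -/
theorem bracket_into_eigenspace_of_nilpotent
    {m : Type*} [NormedAddCommGroup m] [InnerProductSpace ℝ m] [FiniteDimensional ℝ m]
    (b : m →ₗ[ℝ] m →ₗ[ℝ] m) (hb : ∀ X Y : m, b X Y = - b Y X)
    (r : ℕ) (mS : Fin r → Submodule ℝ m) (lam : Fin r → ℝ)
    (horth : ∀ i j, i ≠ j → ∀ X ∈ mS i, ∀ Y ∈ mS j, ⟪X, Y⟫ = 0)
    (hspan : ⨆ i, mS i = ⊤)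
    (hlam : Function.Injective lam)
    (hcompat : ∀ i j k : Fin r, ∀ X ∈ mS i, ∀ Y ∈ mS j, ∀ Z ∈ mS k,
      (lam i - lam k) ^ 2 * ⟪b X Y, Z⟫ + (lam j - lam i) ^ 2 * ⟪b X Z, Y⟫ = 0)
    (k : Fin r) (Z : m) (hZ : Z ∈ mS k)
    (hnil : IsNilpotent (b Z))
    (adk : mS k →ₗ[ℝ] mS k) (hadk : ∀ X : mS k, (adk X : m) = b Z (X : m))
    (hnilk : IsNilpotent adk) :
    ∀ X ∈ (mS k)ᗮ, b Z X ∈ mS k := by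
  -- The weighted sum of projections, with kernel `mS k`.
  let D : m →ₗ[ℝ] m :=
    ∑ j, (lam j - lam k) ^ 2 • ((mS j).starProjection : m →ₗ[ℝ] m)
  have hDapp (y : m) : D y = ∑ j, (lam j - lam k) ^ 2 • (mS j).starProjection y := by
    simp [D]
  have hsum (y : m) : ∑ j, (mS j).starProjection y = y := by
    have hof : OrthogonalFamily ℝ (fun i => mS i) fun i => (mS i).subtypeₗᵢ :=
      fun i j hij v w => horth i j hij v v.2 w w.2
    exact hof.sum_projection_of_mem_iSup y (hspan ▸ Submodule.mem_top)
  have hinner (x y : m) (j : Fin r) :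
      ⟪x, (mS j).starProjection y⟫ = ⟪(mS j).starProjection x, (mS j).starProjection y⟫ := by
    rw [Submodule.inner_starProjection_left_eq_right,
      Submodule.starProjection_eq_self_iff.mpr (Submodule.starProjection_apply_mem _ _)]
  have hsymm (x y : m) : ⟪x, D y⟫ = ⟪y, D x⟫ := by
    simp only [hDapp, inner_sum, inner_smul_right]
    refine Finset.sum_congr rfl fun j _ => ?_
    rw [hinner x y, hinner y x, real_inner_comm]
  have hD (y : m) (hy : ⟪y, D y⟫ = 0) : D y = 0 := by
    simp only [hDapp, inner_sum, inner_smul_right, hinner y y] at hy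
    rw [Finset.sum_eq_zero_iff_of_nonneg
      fun j _ => mul_nonneg (sq_nonneg _) real_inner_self_nonneg] at hy
    rw [hDapp]
    refine Finset.sum_eq_zero fun j hj => ?_
    rcases mul_eq_zero.mp (hy j hj) with h | h
    · rw [h, zero_smul]
    · rw [inner_self_eq_zero.mp h, smul_zero]
  have hker (y : m) (hy : D y = 0) : y ∈ mS k := by
    have h0 : ⟪y, D y⟫ = 0 := by rw [hy, inner_zero_right]
    simp only [hDapp, inner_sum, inner_smul_right, hinner y y] at h0
    rw [Finset.sum_eq_zero_iff_of_nonneg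
      fun j _ => mul_nonneg (sq_nonneg _) real_inner_self_nonneg] at h0
    rw [← hsum y]
    refine Submodule.sum_mem _ fun j hj => ?_
    by_cases hjk : j = k
    · subst hjk
      exact Submodule.starProjection_apply_mem _ _
    · have hc : (lam j - lam k) ^ 2 ≠ 0 := pow_ne_zero 2 (sub_ne_zero.mpr (hlam.ne hjk))
      rw [inner_self_eq_zero.mp ((mul_eq_zero.mp (h0 j hj)).resolve_left hc)]
      exact Submodule.zero_mem _
  -- Expanding both arguments into components reduces skewness to the compatibility condition.
  have hskew (x y : m) : ⟪b Z x, D y⟫ = -⟪b Z y, D x⟫ := by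
    have hexp (u v : m) : ⟪b Z u, D v⟫ = ∑ j, ∑ l, (lam l - lam k) ^ 2 *
        ⟪b Z ((mS j).starProjection u), (mS l).starProjection v⟫ := by
      conv_lhs => rw [← hsum u]
      simp only [hDapp, map_sum, sum_inner, inner_sum, inner_smul_right, Finset.mul_sum]
      exact Finset.sum_comm
    rw [hexp, hexp, Finset.sum_comm (γ := Fin r), ← Finset.sum_neg_distrib]
    refine Finset.sum_congr rfl fun l _ => ?_
    rw [← Finset.sum_neg_distrib]
    refine Finset.sum_congr rfl fun j _ => ?_
    have h := hcompat k j l Z hZ _ (Submodule.starProjection_apply_mem (mS j) x)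
      _ (Submodule.starProjection_apply_mem (mS l) y)
    linear_combination h
  intro X _
  obtain ⟨n, hn⟩ := hnil
  refine hker _ (apply_mem_ker_of_skew_of_pow_eq_zero (b Z) D hD hskew hsymm n (fun x => ?_) X)
  rw [pow_succ, hn, zero_mul, LinearMap.zero_apply, map_zero]
end

section
/- Suppose 𝔪 = 𝔪_1 ⊕ ⋯ ⊕ 𝔪_r is an orthogonal direct sum of subspaces and λ_1, …, λ_r are mutually distinct real numbers satisfying the compatibility condition. Then for all mutually distinct indices i, j, k and all X ∈ 𝔪_i, Y ∈ 𝔪_j, Z ∈ 𝔪_k, the cyclic identity holds: ((λ_i−λ_k)(λ_j−λ_k)/(λ_i−λ_j)²)⟨[X,Y],Z⟩² + ((λ_j−λ_i)(λ_k−λ_i)/(λ_j−λ_k)²)⟨[Y,Z],X⟩² + ((λ_k−λ_j)(λ_i−λ_j)/(λ_k−λ_i)²)⟨[Z,X],Y⟩² = 0. -/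
open scoped RealInnerProductSpace

/-! With `a = λᵢ - λⱼ`, `c = λⱼ - λₖ`, `d = λₖ - λᵢ`, compatibility and antisymmetry make
`⟪[X,Y],Z⟫ / a² = ⟪[Y,Z],X⟫ / c² = ⟪[Z,X],Y⟫ / d²`. Calling the common value `t`, the cyclic sum
is `-t² * a * c * d * (a + c + d)`, which vanishes because `a + c + d = 0`. -/

/-- The cyclic identity for mutually distinct indices, a consequence
of the compatibility condition. -/
theorem cyclic_identity_of_compatibility
    {m : Type*} [NormedAddCommGroup m] [InnerProductSpace ℝ m] [FiniteDimensional ℝ m]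
    (b : m →ₗ[ℝ] m →ₗ[ℝ] m) (hb : ∀ X Y : m, b X Y = - b Y X)
    (r : ℕ) (mS : Fin r → Submodule ℝ m) (lam : Fin r → ℝ)
    (horth : ∀ i j, i ≠ j → ∀ X ∈ mS i, ∀ Y ∈ mS j, ⟪X, Y⟫ = 0)
    (hspan : ⨆ i, mS i = ⊤)
    (hlam : Function.Injective lam)
    (hcompat : ∀ i j k : Fin r, ∀ X ∈ mS i, ∀ Y ∈ mS j, ∀ Z ∈ mS k,
      (lam i - lam k) ^ 2 * ⟪b X Y, Z⟫ + (lam j - lam i) ^ 2 * ⟪b X Z, Y⟫ = 0) :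
    ∀ i j k : Fin r, i ≠ j → j ≠ k → i ≠ k →
      ∀ X ∈ mS i, ∀ Y ∈ mS j, ∀ Z ∈ mS k,
        ((lam i - lam k) * (lam j - lam k) / (lam i - lam j) ^ 2) * ⟪b X Y, Z⟫ ^ 2 +
        ((lam j - lam i) * (lam k - lam i) / (lam j - lam k) ^ 2) * ⟪b Y Z, X⟫ ^ 2 +
        ((lam k - lam j) * (lam i - lam j) / (lam k - lam i) ^ 2) * ⟪b Z X, Y⟫ ^ 2
          = 0 := by
  intro i j k hij hjk hik X hX Y hY Z hZ
  have h1 := hcompat i j k X hX Y hY Z hZ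
  have h2 := hcompat j k i Y hY Z hZ X hX
  rw [hb X Z, inner_neg_left] at h1
  rw [hb Y X, inner_neg_left] at h2
  have ha : lam i - lam j ≠ 0 := sub_ne_zero.mpr (hlam.ne hij)
  have hc : lam j - lam k ≠ 0 := sub_ne_zero.mpr (hlam.ne hjk)
  have hd : lam k - lam i ≠ 0 := sub_ne_zero.mpr (hlam.ne hik.symm)
  obtain ⟨t, ht⟩ : ∃ t, ⟪b X Y, Z⟫ = t * (lam i - lam j) ^ 2 :=
    ⟨⟪b X Y, Z⟫ / (lam i - lam j) ^ 2, by field_simp⟩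
  have hQ : ⟪b Y Z, X⟫ = t * (lam j - lam k) ^ 2 := by
    apply mul_left_cancel₀ (pow_ne_zero 2 ha)
    rw [ht] at h2
    linear_combination h2
  have hR : ⟪b Z X, Y⟫ = t * (lam k - lam i) ^ 2 := by
    apply mul_left_cancel₀ (pow_ne_zero 2 ha)
    rw [ht] at h1
    linear_combination -h1
  rw [ht, hQ, hR]
  field_simp
  ring
end

section
/- Suppose 𝔪 = 𝔪_1 ⊕ ⋯ ⊕ 𝔪_r is an orthogonal direct sum of subspaces, λ_1 < ⋯ < λ_r are real numbers satisfying the compatibility condition, and there exist mutually distinct indices i, j, k and vectors X_i ∈ 𝔪_i, Y_j ∈ 𝔪_j, Z_k ∈ 𝔪_k with ⟨[X_i,Y_j],Z_k⟩ ≠ 0. Then r ≥ 3, and: (a) there exists ρ with 2 ≤ ρ ≤ r−1 such that 𝔪_1 ⊕ ⋯ ⊕ 𝔪_ρ is not closed under [·,·]; (b) there exist μ < ν such that 𝔪_μ ⊕ 𝔪_ν is not closed under [·,·]. -/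
/-!
Since the `λ`'s are distinct, the compatibility condition lets one exchange the last two entries of a
nonvanishing trilinear value `⟪[X, Y], Z⟫` with mutually distinct indices, and antisymmetry lets one
exchange the first two. These transpositions generate all permutations of three letters, so there is
a nonvanishing triple with `i < j < k`. The vector `Z ∈ 𝔪_k` is orthogonal to `𝔪_1 ⊕ ⋯ ⊕ 𝔪_j` and to
`𝔪_i ⊕ 𝔪_j`; both contain `X` and `Y`, while `[X, Y]` is not orthogonal to `Z`. Hence neither sum
is closed under the bracket, and `i < j < k` gives the bounds on `ρ = j` and on `r`.
-/

open scoped RealInnerProductSpace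

/-- A relation on triples that is stable under both adjacent transpositions, and holds for some
triple of distinct indices, holds for some increasing triple. -/
lemma exists_increasing_triple {ι : Type*} [LinearOrder ι] (P : ι → ι → ι → Prop)
    (h₁ : ∀ i j k, P i j k → P j i k)
    (h₂ : ∀ i j k, i ≠ j → i ≠ k → P i j k → P i k j)
    {i j k : ι} (hij : i ≠ j) (hjk : j ≠ k) (hik : i ≠ k) (h : P i j k) :
    ∃ a c d, a < c ∧ c < d ∧ P a c d := by
  have hikj := h₂ i j k hij hik h
  have hjik := h₁ _ _ _ h
  have hjki := h₂ j i k hij.symm hjk hjik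
  have hkij := h₁ _ _ _ hikj
  have hkji := h₁ _ _ _ hjki
  rcases lt_or_gt_of_ne hij with a | a <;> rcases lt_or_gt_of_ne hjk with c | c <;>
    rcases lt_or_gt_of_ne hik with d | d
  · exact ⟨i, j, k, a, c, h⟩
  · exact ⟨i, j, k, a, c, h⟩
  · exact ⟨i, k, j, d, c, hikj⟩
  · exact ⟨k, i, j, d, a, hkij⟩
  · exact ⟨j, i, k, a, d, hjik⟩
  · exact ⟨j, k, i, c, d, hjki⟩
  · exact ⟨k, j, i, c, a, hkji⟩
  · exact ⟨k, j, i, c, a, hkji⟩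

/-- If the compatibility condition holds and some triple with
mutually distinct indices has `⟨[X_i,Y_j],Z_k⟩ ≠ 0`, then `r ≥ 3` and:
(a) there is `ρ` (with, in one-based labels, `2 ≤ ρ ≤ r−1`, i.e. zero-based
`1 ≤ ρ ≤ r−2`) such that `𝔪_0 ⊕ ⋯ ⊕ 𝔪_ρ` is not closed under the bracket, and
(b) there are `μ < ν` such that `𝔪_μ ⊕ 𝔪_ν` is not closed under the bracket. -/
theorem exists_nonsubalgebras_of_essential_triple
    {m : Type*} [NormedAddCommGroup m] [InnerProductSpace ℝ m] [FiniteDimensional ℝ m]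
    (b : m →ₗ[ℝ] m →ₗ[ℝ] m) (hb : ∀ X Y : m, b X Y = - b Y X)
    (r : ℕ) (mS : Fin r → Submodule ℝ m) (lam : Fin r → ℝ)
    (horth : ∀ i j, i ≠ j → ∀ X ∈ mS i, ∀ Y ∈ mS j, ⟪X, Y⟫ = 0)
    (hspan : ⨆ i, mS i = ⊤)
    (hlam : StrictMono lam)
    (hcompat : ∀ i j k : Fin r, ∀ X ∈ mS i, ∀ Y ∈ mS j, ∀ Z ∈ mS k,
      (lam i - lam k) ^ 2 * ⟪b X Y, Z⟫ + (lam j - lam i) ^ 2 * ⟪b X Z, Y⟫ = 0)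
    (hex : ∃ i j k : Fin r, i ≠ j ∧ j ≠ k ∧ i ≠ k ∧
      ∃ X ∈ mS i, ∃ Y ∈ mS j, ∃ Z ∈ mS k, ⟪b X Y, Z⟫ ≠ 0) :
    3 ≤ r ∧
    (∃ ρ : Fin r, 1 ≤ (ρ : ℕ) ∧ (ρ : ℕ) ≤ r - 2 ∧
      ∃ X ∈ (⨆ i ≤ ρ, mS i), ∃ Y ∈ (⨆ i ≤ ρ, mS i), b X Y ∉ (⨆ i ≤ ρ, mS i)) ∧
    (∃ μ ν : Fin r, μ < ν ∧
      ∃ X ∈ mS μ ⊔ mS ν, ∃ Y ∈ mS μ ⊔ mS ν, b X Y ∉ mS μ ⊔ mS ν) := by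
  obtain ⟨i₀, j₀, k₀, hij₀, hjk₀, hik₀, hP⟩ := hex
  obtain ⟨i, j, k, hij, hjk, X, hX, Y, hY, Z, hZ, hne⟩ :=
    exists_increasing_triple
      (fun i j k => ∃ X ∈ mS i, ∃ Y ∈ mS j, ∃ Z ∈ mS k, ⟪b X Y, Z⟫ ≠ 0)
      (by
        rintro i j k ⟨X, hX, Y, hY, Z, hZ, h⟩
        refine ⟨Y, hY, X, hX, Z, hZ, ?_⟩
        rw [hb Y X, inner_neg_left]
        exact neg_ne_zero.mpr h)
      (by
        rintro i j k - hik ⟨X, hX, Y, hY, Z, hZ, h⟩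
        refine ⟨X, hX, Z, hZ, Y, hY, fun h0 => ?_⟩
        have hc := hcompat i j k X hX Y hY Z hZ
        rw [h0, mul_zero, add_zero] at hc
        exact mul_ne_zero (pow_ne_zero 2 (sub_ne_zero.mpr (hlam.injective.ne hik))) h hc)
      hij₀ hjk₀ hik₀ hP
  have hZperp : ∀ l, l ≠ k → mS l ≤ (ℝ ∙ Z)ᗮ := fun l hl W hW =>
    Submodule.mem_orthogonal_singleton_iff_inner_left.mpr (horth l k hl W hW Z hZ)
  have key : ∀ S : Submodule ℝ m, S ≤ (ℝ ∙ Z)ᗮ → b X Y ∉ S := fun S hS hmem =>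
    hne (Submodule.mem_orthogonal_singleton_iff_inner_left.mp (hS hmem))
  have hk := k.isLt
  have hij' : (i : ℕ) < j := hij
  have hjk' : (j : ℕ) < k := hjk
  refine ⟨by omega, ⟨j, by omega, by omega, X, ?_, Y, ?_, key _ ?_⟩,
    ⟨i, j, hij, X, Submodule.mem_sup_left hX, Y, Submodule.mem_sup_right hY, key _ ?_⟩⟩
  · exact le_iSup₂_of_le (f := fun l (_ : l ≤ j) => mS l) i hij.le le_rfl hX
  · exact le_iSup₂_of_le (f := fun l (_ : l ≤ j) => mS l) j le_rfl le_rfl hY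
  · exact iSup₂_le fun l hl => hZperp l (hl.trans_lt hjk).ne
  · exact sup_le (hZperp i (hij.trans hjk).ne) (hZperp j hjk.ne)
end

section
/- Suppose 𝔪 = 𝔪_1 ⊕ ⋯ ⊕ 𝔪_r is an orthogonal direct sum of subspaces, λ_1 < ⋯ < λ_r are real numbers satisfying the compatibility condition, and there exist mutually distinct indices i, j, k and vectors X_i ∈ 𝔪_i, Y_j ∈ 𝔪_j, Z_k ∈ 𝔪_k with ⟨[X_i,Y_j],Z_k⟩ ≠ 0. Then the difference sectional curvature assumes both positive and negative values: there exist orthonormal pairs {X,Y} and {X',Y'} in 𝔪 with ⟨R^d(X,Y)Y,X⟩ > 0 and ⟨R^d(X',Y')Y',X'⟩ < 0. -/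
/-!
Write `c(X,Y,Z) = ⟪[X,Y],Z⟫`. For `X ∈ 𝔪_i`, `Y ∈ 𝔪_j` with `i ≠ j`, the compatibility condition
relates the values of `c` on the permutations of `X, Y` and `Z ∈ 𝔪_k` to `c(X,Y,Z)`, and the Koszul
formula becomes
`(λ_i - λ_j) ⟪α(X,Y),Z⟫ = (λ_i - λ_k) c(X,Y,Z)` and
`(λ_i - λ_j)² ⟪α(Z,Y),X⟫ = -(λ_k - λ_i)(λ_k - λ_j) c(X,Y,Z)`, for every `k`, including `k = i, j`.
Moreover `α(X,X) ∈ 𝔪_i` and `α(Y,Y) ∈ 𝔪_j` are orthogonal. Hence, with `W_k` the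
`𝔪_k`-component of `[X,Y]` (`curvature_formula`),
`(λ_i - λ_j)² ⟪R^d(X,Y)Y,X⟫ = 2 ∑ k, (λ_k - λ_i)(λ_k - λ_j) ‖W_k‖²`.

The coefficient of `‖W_k‖²` is negative exactly when `λ_k` lies strictly between `λ_i` and `λ_j`.
Call `(i, j)` an active pair if some `c(X_i,Y_j,Z_k)` with `i, j, k` distinct is nonzero; if
`W_k ≠ 0` and `k ≠ i, j`, then `(i, k)` and `(j, k)` are active as well. So for an active pair minimizing
`|λ_i - λ_j|` no `W_k ≠ 0` has `λ_k` between `λ_i` and `λ_j`, and the curvature is positive; for an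
active pair maximizing `|λ_i - λ_j|` every `W_k ≠ 0` (with `k ≠ i, j`) has `λ_k` in between,
and the curvature is negative.
-/

open scoped RealInnerProductSpace

section

variable {m : Type*} [NormedAddCommGroup m] [InnerProductSpace ℝ m]
  {b a : m →ₗ[ℝ] m →ₗ[ℝ] m} {r : ℕ} {mS : Fin r → Submodule ℝ m} {lam : Fin r → ℝ}

lemma exists_components (hspan : ⨆ i, mS i = ⊤) (v : m) :
    ∃ W : Fin r → m, (∀ k, W k ∈ mS k) ∧ ∑ k, W k = v := by
  have hv : v ∈ ⨆ i, mS i := hspan ▸ Submodule.mem_top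
  obtain ⟨f, hf⟩ := (Submodule.mem_iSup_iff_exists_finsupp mS v).1 hv
  refine ⟨f, hf.1, ?_⟩
  rw [← hf.2, Finsupp.sum_fintype _ _ (fun _ => rfl)]

lemma inner_sum_component
    (horth : ∀ i j, i ≠ j → ∀ X ∈ mS i, ∀ Y ∈ mS j, ⟪X, Y⟫ = 0)
    {W : Fin r → m} (hW : ∀ k, W k ∈ mS k) {k : Fin r} {Z : m} (hZ : Z ∈ mS k) :
    ⟪∑ l, W l, Z⟫ = ⟪W k, Z⟫ := by
  rw [sum_inner]
  exact Finset.sum_eq_single k (fun l _ hl => horth l k hl _ (hW l) _ hZ) (by simp)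

/-- A vector is determined by its inner products with the elements of the summands. -/
lemma ext_components (hspan : ⨆ i, mS i = ⊤) {u v : m}
    (h : ∀ k, ∀ Z ∈ mS k, ⟪u, Z⟫ = ⟪v, Z⟫) : u = v := by
  refine ext_inner_right ℝ fun Z => ?_
  obtain ⟨W, hW, rfl⟩ := exists_components hspan Z
  simp only [inner_sum]
  exact Finset.sum_congr rfl fun k _ => h k _ (hW k)

/-- The Levi-Civita product is metric: each `α(X, ·)` is skew-symmetric. -/
lemma levi_skew (hb : ∀ X Y : m, b X Y = - b Y X)
    (ha : ∀ X Y Z : m, 2 * ⟪a X Y, Z⟫ = ⟪b X Y, Z⟫ - ⟪X, b Y Z⟫ - ⟪b X Z, Y⟫)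
    (X Y Z : m) : ⟪a X Y, Z⟫ = - ⟪a X Z, Y⟫ := by
  have h1 := ha X Y Z
  have h2 := ha X Z Y
  rw [hb Z Y, inner_neg_right] at h2
  linarith

/-- For `X ∈ 𝔪_i`, the vector `α(X, X)` lies in `𝔪_i`, being orthogonal to the other summands. -/
lemma levi_self
    (hb : ∀ X Y : m, b X Y = - b Y X)
    (ha : ∀ X Y Z : m, 2 * ⟪a X Y, Z⟫ = ⟪b X Y, Z⟫ - ⟪X, b Y Z⟫ - ⟪b X Z, Y⟫)
    (hlam : StrictMono lam)
    (hcompat : ∀ i j k : Fin r, ∀ X ∈ mS i, ∀ Y ∈ mS j, ∀ Z ∈ mS k,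
      (lam i - lam k) ^ 2 * ⟪b X Y, Z⟫ + (lam j - lam i) ^ 2 * ⟪b X Z, Y⟫ = 0)
    {i k : Fin r} (hik : k ≠ i) {X Z : m} (hX : X ∈ mS i) (hZ : Z ∈ mS k) :
    ⟪a X X, Z⟫ = 0 := by
  have h1 := hcompat k i i Z hZ X hX X hX
  have h2 := ha X X Z
  have h3 : ⟪b X X, Z⟫ = 0 := by
    have := congrArg (fun v => ⟪v, Z⟫) (hb X X)
    simp only [inner_neg_left] at this
    linarith
  have hne : (lam k - lam i) ^ 2 ≠ 0 := pow_ne_zero 2 (sub_ne_zero.2 (hlam.injective.ne hik))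
  have h4 : ⟪b Z X, X⟫ = 0 := by
    have : (lam k - lam i) ^ 2 * ⟪b Z X, X⟫ = 0 := by linear_combination h1 / 2
    exact (mul_eq_zero.1 this).resolve_left hne
  rw [real_inner_comm (b X Z) X, hb X Z, inner_neg_left, h4, h3] at h2
  linarith

lemma levi_self_orthogonal
    (hb : ∀ X Y : m, b X Y = - b Y X)
    (ha : ∀ X Y Z : m, 2 * ⟪a X Y, Z⟫ = ⟪b X Y, Z⟫ - ⟪X, b Y Z⟫ - ⟪b X Z, Y⟫)
    (horth : ∀ i j, i ≠ j → ∀ X ∈ mS i, ∀ Y ∈ mS j, ⟪X, Y⟫ = 0)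
    (hspan : ⨆ i, mS i = ⊤)
    (hlam : StrictMono lam)
    (hcompat : ∀ i j k : Fin r, ∀ X ∈ mS i, ∀ Y ∈ mS j, ∀ Z ∈ mS k,
      (lam i - lam k) ^ 2 * ⟪b X Y, Z⟫ + (lam j - lam i) ^ 2 * ⟪b X Z, Y⟫ = 0)
    {i j : Fin r} (hij : i ≠ j) {X Y : m} (hX : X ∈ mS i) (hY : Y ∈ mS j) :
    ⟪a X X, a Y Y⟫ = 0 := by
  obtain ⟨U, hU, hUs⟩ := exists_components hspan (a Y Y)
  have hUi : U i = 0 := by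
    have h := levi_self hb ha hlam hcompat hij hY (hU i)
    rw [← hUs, inner_sum_component horth hU (hU i)] at h
    exact inner_self_eq_zero.1 h
  rw [← hUs, inner_sum]
  refine Finset.sum_eq_zero fun k _ => ?_
  by_cases hk : k = i
  · subst hk
    rw [hUi, inner_zero_right]
  · exact levi_self hb ha hlam hcompat hk hX (hU k)

/-- The `𝔪_k`-component of `α(X, Y)` is `(λ_i - λ_k) / (λ_i - λ_j)` times that of `[X, Y]`. -/
lemma levi_component
    (hb : ∀ X Y : m, b X Y = - b Y X)
    (ha : ∀ X Y Z : m, 2 * ⟪a X Y, Z⟫ = ⟪b X Y, Z⟫ - ⟪X, b Y Z⟫ - ⟪b X Z, Y⟫)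
    (hlam : StrictMono lam)
    (hcompat : ∀ i j k : Fin r, ∀ X ∈ mS i, ∀ Y ∈ mS j, ∀ Z ∈ mS k,
      (lam i - lam k) ^ 2 * ⟪b X Y, Z⟫ + (lam j - lam i) ^ 2 * ⟪b X Z, Y⟫ = 0)
    {i j k : Fin r} (hij : i ≠ j) {X Y Z : m} (hX : X ∈ mS i) (hY : Y ∈ mS j) (hZ : Z ∈ mS k) :
    (lam i - lam j) * ⟪a X Y, Z⟫ = (lam i - lam k) * ⟪b X Y, Z⟫ := by
  have h1 := hcompat i j k X hX Y hY Z hZ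
  have h2 := hcompat j i k Y hY X hX Z hZ
  have h3 := ha X Y Z
  rw [hb Y X, inner_neg_left] at h2
  rw [real_inner_comm (b Y Z) X] at h3
  have hne : lam i - lam j ≠ 0 := sub_ne_zero.2 (hlam.injective.ne hij)
  apply mul_left_cancel₀ hne
  linear_combination ((lam i - lam j) ^ 2 * h3 - h2 - h1) / 2

lemma levi_swap
    (hb : ∀ X Y : m, b X Y = - b Y X)
    (ha : ∀ X Y Z : m, 2 * ⟪a X Y, Z⟫ = ⟪b X Y, Z⟫ - ⟪X, b Y Z⟫ - ⟪b X Z, Y⟫)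
    (hcompat : ∀ i j k : Fin r, ∀ X ∈ mS i, ∀ Y ∈ mS j, ∀ Z ∈ mS k,
      (lam i - lam k) ^ 2 * ⟪b X Y, Z⟫ + (lam j - lam i) ^ 2 * ⟪b X Z, Y⟫ = 0)
    {i j k : Fin r} {X Y Z : m} (hX : X ∈ mS i) (hY : Y ∈ mS j) (hZ : Z ∈ mS k) :
    (lam i - lam j) ^ 2 * ⟪a Z Y, X⟫
      = - ((lam k - lam i) * (lam k - lam j)) * ⟪b X Y, Z⟫ := by
  have h1 := hcompat i j k X hX Y hY Z hZ
  have h2 := hcompat j i k Y hY X hX Z hZ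
  have h3 := ha Z Y X
  rw [hb Y X, inner_neg_left] at h2
  rw [real_inner_comm (b Y X) Z, hb Y X, inner_neg_left, hb Z Y, hb Z X, inner_neg_left,
    inner_neg_left] at h3
  linear_combination ((lam i - lam j) ^ 2 * h3 + h1 - h2) / 2

/-- The difference sectional curvature of a plane spanned by vectors of two distinct summands. -/
lemma curvature_formula
    (hb : ∀ X Y : m, b X Y = - b Y X)
    (ha : ∀ X Y Z : m, 2 * ⟪a X Y, Z⟫ = ⟪b X Y, Z⟫ - ⟪X, b Y Z⟫ - ⟪b X Z, Y⟫)
    (horth : ∀ i j, i ≠ j → ∀ X ∈ mS i, ∀ Y ∈ mS j, ⟪X, Y⟫ = 0)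
    (hspan : ⨆ i, mS i = ⊤)
    (hlam : StrictMono lam)
    (hcompat : ∀ i j k : Fin r, ∀ X ∈ mS i, ∀ Y ∈ mS j, ∀ Z ∈ mS k,
      (lam i - lam k) ^ 2 * ⟪b X Y, Z⟫ + (lam j - lam i) ^ 2 * ⟪b X Z, Y⟫ = 0)
    {i j : Fin r} (hij : i ≠ j) {X Y : m} (hX : X ∈ mS i) (hY : Y ∈ mS j)
    {W : Fin r → m} (hW : ∀ k, W k ∈ mS k) (hWs : ∑ k, W k = b X Y) :
    (lam i - lam j) ^ 2 * ⟪a X (a Y Y) - a Y (a X Y) - a (b X Y) Y, X⟫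
      = 2 * ∑ k, (lam k - lam i) * (lam k - lam j) * ⟪W k, W k⟫ := by
  have hc : ∀ k, ∀ Z ∈ mS k, ⟪b X Y, Z⟫ = ⟪W k, Z⟫ := fun k Z hZ => by
    rw [← hWs, inner_sum_component horth hW hZ]
  have t1 : ⟪a X (a Y Y), X⟫ = 0 := by
    rw [levi_skew hb ha, levi_self_orthogonal hb ha horth hspan hlam hcompat hij hX hY, neg_zero]
  have t2 : ⟪a Y (a X Y), X⟫ = - ⟪a X Y, a Y X⟫ := by
    rw [levi_skew hb ha, real_inner_comm]
  have e1 : (lam i - lam j) • a X Y = ∑ k, (lam i - lam k) • W k := by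
    refine ext_components hspan fun k Z hZ => ?_
    rw [inner_sum_component horth (fun l => (mS l).smul_mem _ (hW l)) hZ, real_inner_smul_left,
      real_inner_smul_left, levi_component hb ha hlam hcompat hij hX hY hZ, hc k Z hZ]
  have t3 : (lam i - lam j) ^ 2 * ⟪a X Y, a Y X⟫
      = ∑ k, (lam k - lam i) * (lam k - lam j) * ⟪W k, W k⟫ := by
    have : (lam i - lam j) ^ 2 * ⟪a X Y, a Y X⟫
        = (lam i - lam j) * ⟪(lam i - lam j) • a X Y, a Y X⟫ := by
      rw [real_inner_smul_left]; ring
    rw [this, e1, sum_inner, Finset.mul_sum]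
    refine Finset.sum_congr rfl fun k _ => ?_
    have h := levi_component hb ha hlam hcompat hij.symm hY hX (hW k)
    rw [hb Y X, inner_neg_left, hc k _ (hW k)] at h
    rw [real_inner_smul_left, real_inner_comm]
    linear_combination (-(lam i - lam k)) * h
  have t4 : (lam i - lam j) ^ 2 * ⟪a (b X Y) Y, X⟫
      = - ∑ k, (lam k - lam i) * (lam k - lam j) * ⟪W k, W k⟫ := by
    rw [← hWs, map_sum, LinearMap.sum_apply, sum_inner, Finset.mul_sum, ← Finset.sum_neg_distrib]
    refine Finset.sum_congr rfl fun k _ => ?_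
    rw [levi_swap hb ha hcompat hX hY (hW k), hc k _ (hW k)]
    ring
  rw [inner_sub_left, inner_sub_left, t1, t2]
  linear_combination t3 - t4

/-- The pair `(i, j)` is active if `⟪[X_i, Y_j], Z_k⟫ ≠ 0` for some index `k` different from both and
some vectors of the summands, where `X_i`, `Y_j` are taken to be unit vectors. -/
def ActivePair (b : m →ₗ[ℝ] m →ₗ[ℝ] m) (mS : Fin r → Submodule ℝ m) (p : Fin r × Fin r) : Prop :=
  p.1 ≠ p.2 ∧ ∃ k, k ≠ p.1 ∧ k ≠ p.2 ∧ ∃ X ∈ mS p.1, ∃ Y ∈ mS p.2, ∃ Z ∈ mS k,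
    ‖X‖ = 1 ∧ ‖Y‖ = 1 ∧ ⟪b X Y, Z⟫ ≠ 0

lemma activePair_of_ne_zero {i j k : Fin r} (hij : i ≠ j) (hki : k ≠ i) (hkj : k ≠ j)
    {X Y Z : m} (hX : X ∈ mS i) (hY : Y ∈ mS j) (hZ : Z ∈ mS k) (h : ⟪b X Y, Z⟫ ≠ 0) :
    ActivePair b mS (i, j) := by
  have hX0 : X ≠ 0 := by rintro rfl; simp at h
  have hY0 : Y ≠ 0 := by rintro rfl; simp at h
  refine ⟨hij, k, hki, hkj, ‖X‖⁻¹ • X, (mS i).smul_mem _ hX, ‖Y‖⁻¹ • Y, (mS j).smul_mem _ hY,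
    Z, hZ, ?_, ?_, ?_⟩
  · exact norm_smul_inv_norm (𝕜 := ℝ) hX0
  · exact norm_smul_inv_norm (𝕜 := ℝ) hY0
  · simp only [map_smul, LinearMap.smul_apply, real_inner_smul_left]
    exact mul_ne_zero (inv_ne_zero (norm_ne_zero_iff.2 hY0))
      (mul_ne_zero (inv_ne_zero (norm_ne_zero_iff.2 hX0)) h)

/-- Compatibility moves a nonzero `⟪[X_i, Y_j], Z_k⟫` to `⟪[X_i, Z_k], Y_j⟫`. -/
lemma activePair_right (hlam : StrictMono lam)
    (hcompat : ∀ i j k : Fin r, ∀ X ∈ mS i, ∀ Y ∈ mS j, ∀ Z ∈ mS k,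
      (lam i - lam k) ^ 2 * ⟪b X Y, Z⟫ + (lam j - lam i) ^ 2 * ⟪b X Z, Y⟫ = 0)
    {i j k : Fin r} (hij : i ≠ j) (hki : k ≠ i) (hkj : k ≠ j)
    {X Y Z : m} (hX : X ∈ mS i) (hY : Y ∈ mS j) (hZ : Z ∈ mS k) (h : ⟪b X Y, Z⟫ ≠ 0) :
    ActivePair b mS (i, k) := by
  refine activePair_of_ne_zero hki.symm hij.symm hkj.symm hX hZ hY fun h0 => ?_
  have h1 := hcompat i j k X hX Y hY Z hZ
  rw [h0, mul_zero, add_zero] at h1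
  exact mul_ne_zero (pow_ne_zero 2 (sub_ne_zero.2 (hlam.injective.ne hki.symm))) h h1

/-- If, for unit vectors `X ∈ 𝔪_i`, `Y ∈ 𝔪_j`, every term of the curvature formula with nonzero
`W_k` and `k ≠ i, j` has the sign of `s`, so has the curvature. -/
lemma exists_curvature_sign
    (hb : ∀ X Y : m, b X Y = - b Y X)
    (ha : ∀ X Y Z : m, 2 * ⟪a X Y, Z⟫ = ⟪b X Y, Z⟫ - ⟪X, b Y Z⟫ - ⟪b X Z, Y⟫)
    (horth : ∀ i j, i ≠ j → ∀ X ∈ mS i, ∀ Y ∈ mS j, ⟪X, Y⟫ = 0)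
    (hspan : ⨆ i, mS i = ⊤)
    (hlam : StrictMono lam)
    (hcompat : ∀ i j k : Fin r, ∀ X ∈ mS i, ∀ Y ∈ mS j, ∀ Z ∈ mS k,
      (lam i - lam k) ^ 2 * ⟪b X Y, Z⟫ + (lam j - lam i) ^ 2 * ⟪b X Z, Y⟫ = 0)
    (s : ℝ) {i j : Fin r} (hp : ActivePair b mS (i, j))
    (hs : ∀ k, k ≠ i → k ≠ j → ActivePair b mS (i, k) → ActivePair b mS (j, k) →
      0 < s * ((lam k - lam i) * (lam k - lam j))) :
    ∃ X Y : m, ⟪X, Y⟫ = 0 ∧ ‖X‖ = 1 ∧ ‖Y‖ = 1 ∧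
      0 < s * ⟪a X (a Y Y) - a Y (a X Y) - a (b X Y) Y, X⟫ := by
  obtain ⟨hij, k₀, hki, hkj, X, hX, Y, hY, Z, hZ, hX1, hY1, hne⟩ := hp
  dsimp only at hij hki hkj hX hY
  refine ⟨X, Y, horth i j hij X hX Y hY, hX1, hY1, ?_⟩
  obtain ⟨W, hW, hWs⟩ := exists_components hspan (b X Y)
  have hK := curvature_formula hb ha horth hspan hlam hcompat hij hX hY hW hWs
  have hpos : ∀ k, k ≠ i → k ≠ j → W k ≠ 0 →
      0 < s * ((lam k - lam i) * (lam k - lam j) * ⟪W k, W k⟫) := by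
    intro k hki hkj hk
    have hkk : 0 < ⟪W k, W k⟫ := real_inner_self_pos.2 hk
    have hc : ⟪b X Y, W k⟫ ≠ 0 := by
      rw [← hWs, inner_sum_component horth hW (hW k)]
      exact hkk.ne'
    have hc' : ⟪b Y X, W k⟫ ≠ 0 := by
      rw [hb Y X, inner_neg_left]
      exact neg_ne_zero.2 hc
    have := mul_pos (hs k hki hkj (activePair_right hlam hcompat hij hki hkj hX hY (hW k) hc)
      (activePair_right hlam hcompat hij.symm hkj hki hY hX (hW k) hc')) hkk
    linarith
  have hW0 : W k₀ ≠ 0 := by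
    intro h0
    rw [← hWs, inner_sum_component horth hW hZ, h0, inner_zero_left] at hne
    exact hne rfl
  have hsum : 0 < ∑ k, s * ((lam k - lam i) * (lam k - lam j) * ⟪W k, W k⟫) := by
    refine Finset.sum_pos' (fun k _ => ?_) ⟨k₀, Finset.mem_univ _, hpos k₀ hki hkj hW0⟩
    by_cases h1 : k = i
    · simp [h1]
    by_cases h2 : k = j
    · simp [h2]
    by_cases h3 : W k = 0
    · simp [h3]
    exact (hpos k h1 h2 h3).le
  rw [← Finset.mul_sum] at hsum
  refine pos_of_mul_pos_right (a := (lam i - lam j) ^ 2) ?_ (sq_nonneg _)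
  linarith [congrArg (fun t => s * t) hK]

end

/-- If the compatibility condition holds and some triple with
mutually distinct indices has `⟨[X_i,Y_j],Z_k⟩ ≠ 0`, then the difference sectional
curvature takes both positive and negative values. -/
theorem difference_sectional_curvature_pos_and_neg
    {m : Type*} [NormedAddCommGroup m] [InnerProductSpace ℝ m] [FiniteDimensional ℝ m]
    (b : m →ₗ[ℝ] m →ₗ[ℝ] m) (hb : ∀ X Y : m, b X Y = - b Y X)
    (a : m →ₗ[ℝ] m →ₗ[ℝ] m)
    (ha : ∀ X Y Z : m, 2 * ⟪a X Y, Z⟫ = ⟪b X Y, Z⟫ - ⟪X, b Y Z⟫ - ⟪b X Z, Y⟫)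
    (r : ℕ) (mS : Fin r → Submodule ℝ m) (lam : Fin r → ℝ)
    (horth : ∀ i j, i ≠ j → ∀ X ∈ mS i, ∀ Y ∈ mS j, ⟪X, Y⟫ = 0)
    (hspan : ⨆ i, mS i = ⊤)
    (hlam : StrictMono lam)
    (hcompat : ∀ i j k : Fin r, ∀ X ∈ mS i, ∀ Y ∈ mS j, ∀ Z ∈ mS k,
      (lam i - lam k) ^ 2 * ⟪b X Y, Z⟫ + (lam j - lam i) ^ 2 * ⟪b X Z, Y⟫ = 0)
    (hex : ∃ i j k : Fin r, i ≠ j ∧ j ≠ k ∧ i ≠ k ∧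
      ∃ X ∈ mS i, ∃ Y ∈ mS j, ∃ Z ∈ mS k, ⟪b X Y, Z⟫ ≠ 0) :
    (∃ X Y : m, ⟪X, Y⟫ = 0 ∧ ‖X‖ = 1 ∧ ‖Y‖ = 1 ∧
      0 < ⟪a X (a Y Y) - a Y (a X Y) - a (b X Y) Y, X⟫) ∧
    (∃ X Y : m, ⟪X, Y⟫ = 0 ∧ ‖X‖ = 1 ∧ ‖Y‖ = 1 ∧
      ⟪a X (a Y Y) - a Y (a X Y) - a (b X Y) Y, X⟫ < 0) := by
  classical
  obtain ⟨i, j, k, hij, hjk, hik, X, hX, Y, hY, Z, hZ, hne⟩ := hex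
  let S : Finset (Fin r × Fin r) := Finset.univ.filter (ActivePair b mS)
  have hS : S.Nonempty := ⟨(i, j), Finset.mem_filter.2 ⟨Finset.mem_univ _,
    activePair_of_ne_zero hij hik.symm hjk.symm hX hY hZ hne⟩⟩
  have hmem : ∀ p, ActivePair b mS p → p ∈ S := fun p hp =>
    Finset.mem_filter.2 ⟨Finset.mem_univ _, hp⟩
  constructor
  -- `λ_k` strictly between `λ_p` and `λ_q` would make `(p, k)` a shorter active pair.
  · obtain ⟨⟨p, q⟩, hpS, hmin⟩ := S.exists_min_image (fun p => |lam p.1 - lam p.2|) hS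
    have hp := (Finset.mem_filter.1 hpS).2
    simpa only [one_mul] using
      exists_curvature_sign hb ha horth hspan hlam hcompat 1 hp fun k hki hkj h1 _ => by
        have h := sq_le_sq.2 (hmin _ (hmem _ h1))
        have := pow_pos (abs_pos.2 (sub_ne_zero.2 (hlam.injective.ne hkj))) 2
        rw [sq_abs] at this
        dsimp only at h
        nlinarith
  -- `λ_k` outside the interval would make `(p, k)` or `(q, k)` a longer active pair.
  · obtain ⟨⟨p, q⟩, hpS, hmax⟩ := S.exists_max_image (fun p => |lam p.1 - lam p.2|) hS
    have hp := (Finset.mem_filter.1 hpS).2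
    simpa only [neg_mul, one_mul, neg_pos] using
      exists_curvature_sign hb ha horth hspan hlam hcompat (-1) hp fun k hki hkj h1 h2 => by
        have h1 := hmax _ (hmem _ h1)
        have h2 := hmax _ (hmem _ h2)
        dsimp only at h1 h2
        have hk1 := sub_ne_zero.2 (hlam.injective.ne hki)
        have hk2 := sub_ne_zero.2 (hlam.injective.ne hkj)
        rw [neg_one_mul, neg_pos]
        by_contra! hcon
        rcases hk1.lt_or_gt with h3 | h3 <;> rcases hk2.lt_or_gt with h4 | h4
        · rcases abs_cases (lam p - lam k) with h5 | h5 <;>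
            rcases abs_cases (lam q - lam k) with h6 | h6 <;>
            rcases abs_cases (lam p - lam q) with h7 | h7 <;> linarith
        · exact absurd (mul_neg_of_neg_of_pos h3 h4) hcon.not_gt
        · exact absurd (mul_neg_of_pos_of_neg h3 h4) hcon.not_gt
        · rcases abs_cases (lam p - lam k) with h5 | h5 <;>
            rcases abs_cases (lam q - lam k) with h6 | h6 <;>
            rcases abs_cases (lam p - lam q) with h7 | h7 <;> linarith
end

section
/- Suppose the bracket is naturally reductive, i.e. ⟨[X,Y],Z⟩ + ⟨Y,[X,Z]⟩ = 0 for all X,Y,Z ∈ 𝔪. Then: (a) ⟨R^d(X,Y)Y,X⟩ = (1/4)‖[X,Y]‖² for every orthonormal pair {X,Y} in 𝔪; and (b) every Codazzi symmetric bilinear form A on 𝔪 is parallel, i.e. α(X,A) = 0 for all X ∈ 𝔪. -/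
/-!
Natural reductivity reduces the Koszul formula to `α(X,Y) = ½[X,Y]`. Substituting, the curvature
expression becomes `¼⟪[Y,[X,Y]],X⟫`, which is `¼‖[X,Y]‖²` since `ad Y` is skew.

For a Codazzi form `A`, put `T(X,Y,Z) = A(X,[Y,Z])`, which is skew in `Y, Z`. The Codazzi equation
says `2T(Z,X,Y) = T(X,Y,Z) + T(Y,Z,X)`. Its cyclic permutations force `T` to be cyclically
invariant, hence totally skew, and `T(Z,X,Y) + T(Y,X,Z) = 0` is the parallel condition.
-/


open scoped RealInnerProductSpace

/-- Naturally reductive case: (a) the difference sectional curvature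
equals `‖[X,Y]‖²/4` on orthonormal pairs, and (b) every Codazzi symmetric bilinear
form is parallel. -/
theorem naturally_reductive_codazzi_parallel
    {m : Type*} [NormedAddCommGroup m] [InnerProductSpace ℝ m] [FiniteDimensional ℝ m]
    (b : m →ₗ[ℝ] m →ₗ[ℝ] m) (hb : ∀ X Y : m, b X Y = - b Y X)
    (a : m →ₗ[ℝ] m →ₗ[ℝ] m)
    (ha : ∀ X Y Z : m, 2 * ⟪a X Y, Z⟫ = ⟪b X Y, Z⟫ - ⟪X, b Y Z⟫ - ⟪b X Z, Y⟫)
    (hnat : ∀ X Y Z : m, ⟪b X Y, Z⟫ + ⟪Y, b X Z⟫ = 0) :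
    (∀ X Y : m, ⟪X, Y⟫ = 0 → ‖X‖ = 1 → ‖Y‖ = 1 →
      ⟪a X (a Y Y) - a Y (a X Y) - a (b X Y) Y, X⟫ = ‖b X Y‖ ^ 2 / 4) ∧
    (∀ A : m →ₗ[ℝ] m →ₗ[ℝ] ℝ, (∀ X Y : m, A X Y = A Y X) →
      (∀ X Y Z : m, -A (a X Y) Z - A Y (a X Z) = -A (a Y X) Z - A X (a Y Z)) →
      ∀ X Y Z : m, -A (a X Y) Z - A Y (a X Z) = 0) := by
  have hab : ∀ X Y : m, a X Y = (1 / 2 : ℝ) • b X Y := by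
    intro X Y
    refine ext_inner_right ℝ fun Z => ?_
    have h₁ := ha X Y Z
    have h₂ := hnat Y X Z
    have h₃ := hnat X Y Z
    rw [hb Y X, inner_neg_left] at h₂
    rw [real_inner_comm] at h₃
    rw [real_inner_smul_left]
    linarith [real_inner_comm (b X Y) Z, real_inner_comm (b X Z) Y]
  refine ⟨fun X Y _ _ _ => ?_, fun A hA hC X Y Z => ?_⟩
  · have hYY : b Y Y = 0 := by
      have : IsAddTorsionFree m := IsAddTorsionFree.of_isTorsionFree ℝ m
      exact self_eq_neg.mp (hb Y Y)
    have h := hnat Y (b X Y) X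
    rw [hb Y X, inner_neg_right, real_inner_self_eq_norm_sq] at h
    simp only [hab, hb (b X Y) Y, hYY, map_smul, map_zero, smul_zero, smul_neg, inner_sub_left,
      inner_neg_left, inner_zero_left, real_inner_smul_left]
    linarith
  · simp only [hab, map_smul, LinearMap.smul_apply, smul_eq_mul] at hC ⊢
    -- The Codazzi equation for the cyclic permutations of `(X, Y, Z)`, in terms of `T`.
    have cyc : ∀ U V W : m, 2 * A W (b U V) = A U (b V W) + A V (b W U) := by
      intro U V W
      have h := hC U V W
      rw [hb V U, hb U W, map_neg, map_neg, LinearMap.neg_apply, hA (b U V) W] at h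
      linarith
    rw [hA (b X Y) Z, hb X Z, map_neg]
    linarith [cyc X Y Z, cyc Y Z X, cyc Z X Y]
end
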